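/- Let R be a commutative ring and I ⊆ R a finitely generated ideal such that R is I-adically complete and separated. Let M be an R-module that is I-adically complete and separated, and let (m_i)_{i∈ι} be a family of elements of M whose images in M/IM form a basis of M/IM as an R/I-module. Let F̂ denote the I-adic completion of the free R-module ⊕_{i∈ι} R and φ : F̂ → M the map induced by sending the i-th basis vector to m_i. Then φ is surjective; if moreover M is flat as an R-module, then φ is an isomorphism, so M is pro-free (isomorphic to the I-adic completion of a free R-module). -/

import Mathlib

open TensorProduct in
/-- Key step: coefficients in `I ^ n` whose combination lies in `I ^ (n+1) M`
lie in `I ^ (n+1)`, for flat `M`. -/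
theorem stmt6_step {R M ι : Type*} [CommRing R] [AddCommGroup M] [Module R M]
    (I : Ideal R) [Module.Flat R M] (m : ι → M) (j : ι)
    (c : M →ₗ[R] R ⧸ I) (hc : ∀ v : ι →₀ R, c (Finsupp.linearCombination R m v) = Submodule.Quotient.mk (v j))
    (n : ℕ) (v : ι →₀ R) (hv : ∀ i, v i ∈ I ^ n)
    (hm : Finsupp.linearCombination R m v ∈ (I ^ (n + 1) • ⊤ : Submodule R M)) :
    v j ∈ I ^ (n + 1) := by
  classical
  let g : R →ₗ[R] ((I ^ n : Ideal R) →ₗ[R] R ⧸ (I ^ (n + 1))) :=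
    LinearMap.toSpanSingleton R _
      ((Submodule.mkQ (I ^ (n + 1))).comp (Submodule.subtype (I ^ n)))
  have hg : I ≤ LinearMap.ker g := by
    intro a ha
    rw [LinearMap.mem_ker]
    ext ⟨b, hb⟩
    change a • (Submodule.Quotient.mk b : R ⧸ (I ^ (n + 1))) = 0
    rw [← Submodule.Quotient.mk_smul, Submodule.Quotient.mk_eq_zero, pow_succ', smul_eq_mul]
    exact Ideal.mul_mem_mul ha hb
  let B : M →ₗ[R] ((I ^ n : Ideal R) →ₗ[R] R ⧸ (I ^ (n + 1))) := (Submodule.liftQ I g hg).comp c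
  have hBs : ∀ (x : M) (b : (I ^ n : Ideal R)) (r : R), c x = Submodule.Quotient.mk r →
      B x b = Submodule.Quotient.mk (r * b) := by
    intro x b r h
    change (Submodule.liftQ I g hg (c x)) b = _
    rw [h]
    rfl
  let T := LinearMap.lTensor M (Submodule.subtype (I ^ n : Ideal R))
  have hT : Function.Injective T :=
    Module.Flat.lTensor_preserves_injective_linearMap _ (Submodule.injective_subtype _)
  have key : ∀ x ∈ (I ^ (n + 1) • ⊤ : Submodule R M),
      ∃ w : M ⊗[R] (I ^ n : Ideal R), T w = x ⊗ₜ 1 ∧ TensorProduct.lift B w = 0 := by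
    intro x hx
    induction hx using Submodule.smul_induction_on' with
    | smul a ha y hy =>
      refine ⟨y ⊗ₜ ⟨a, Ideal.pow_le_pow_right (Nat.le_succ n) ha⟩, ?_, ?_⟩
      · change y ⊗ₜ[R] a = _
        rw [TensorProduct.smul_tmul, smul_eq_mul, mul_one]
      · obtain ⟨r, hr⟩ := Submodule.Quotient.mk_surjective _ (c y)
        rw [TensorProduct.lift.tmul, hBs _ _ r hr.symm, Submodule.Quotient.mk_eq_zero]
        exact Ideal.mul_mem_left _ _ ha
    | add x hx y hy h1 h2 =>
      obtain ⟨w, h1, h1'⟩ := h1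
      obtain ⟨w', h2, h2'⟩ := h2
      exact ⟨w + w', by rw [map_add, h1, h2, TensorProduct.add_tmul], by rw [map_add, h1', h2', add_zero]⟩
  obtain ⟨w, hw, hw0⟩ := key _ hm
  let z : M ⊗[R] (I ^ n : Ideal R) := ∑ i ∈ v.support, m i ⊗ₜ ⟨v i, hv i⟩
  have hz : T z = T w := by
    rw [hw, Finsupp.linearCombination_apply, Finsupp.sum, TensorProduct.sum_tmul, map_sum]
    refine Finset.sum_congr rfl fun i _ => ?_
    change m i ⊗ₜ[R] v i = _
    rw [TensorProduct.smul_tmul, smul_eq_mul, mul_one]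
  have hzw := hT hz
  rw [← hzw, map_sum] at hw0
  rw [← Submodule.Quotient.mk_eq_zero (I ^ (n + 1)), ← hw0]
  have hB : ∀ i, TensorProduct.lift B (m i ⊗ₜ ⟨v i, hv i⟩) =
      if i = j then (Submodule.Quotient.mk (v i) : R ⧸ (I ^ (n + 1))) else 0 := by
    intro i
    rw [TensorProduct.lift.tmul, hBs _ _ ((Finsupp.single i (1 : R)) j)]
    · by_cases h : i = j <;> simp [h]
    · rw [← hc]; simp
  rw [Finset.sum_congr rfl fun i _ => hB i, Finset.sum_ite_eq']
  split_ifs with h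
  · rfl
  · rw [Finsupp.notMem_support_iff.mp h]; simp

/-- Existence of coordinate functionals `M → R/I`. -/
theorem stmt6_coord {R M ι : Type*} [CommRing R] [AddCommGroup M] [Module R M]
    (I : Ideal R) (m : ι → M)
    (hs : Function.Surjective ((I • ⊤ : Submodule R M).mkQ ∘ₗ Finsupp.linearCombination R m))
    (hind : ∀ c : ι →₀ R,
      (c.sum fun i a => a • m i) ∈ (I • ⊤ : Submodule R M) → ∀ i, c i ∈ I) (j : ι) :
    ∃ c : M →ₗ[R] R ⧸ I, ∀ v : ι →₀ R,
      c (Finsupp.linearCombination R m v) = Submodule.Quotient.mk (v j) := by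
  let q := (I • ⊤ : Submodule R M).mkQ ∘ₗ Finsupp.linearCombination R m
  let e := q.quotKerEquivOfSurjective hs
  have hk : LinearMap.ker q ≤ LinearMap.ker ((Submodule.mkQ I).comp (Finsupp.lapply j : (ι →₀ R) →ₗ[R] R)) := by
    intro v hv
    have h1 : Finsupp.linearCombination R m v ∈ (I • ⊤ : Submodule R M) := by
      rw [← Submodule.Quotient.mk_eq_zero]; exact hv
    have h2 := hind v h1 j
    rw [← Submodule.Quotient.mk_eq_zero] at h2
    exact h2
  refine ⟨(Submodule.liftQ _ _ hk).comp (e.symm.toLinearMap.comp (I • ⊤ : Submodule R M).mkQ), fun v => ?_⟩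
  have : e.symm ((I • ⊤ : Submodule R M).mkQ (Finsupp.linearCombination R m v)) =
      Submodule.Quotient.mk v := by
    rw [LinearEquiv.symm_apply_eq]; rfl
  change Submodule.liftQ _ _ hk (e.symm ((I • ⊤ : Submodule R M).mkQ _)) = _
  rw [this]
  rfl

/-- (Completed Nakayama.) Let `R` be a commutative ring, `I` a finitely
generated ideal with `R` `I`-adically complete and separated, and `M` an `I`-adically
complete and separated `R`-module.  Suppose `(mᵢ)` is a family of elements of `M` whose
residue classes form a basis of `M/IM` over `R/I` (expressed as: the `mᵢ` span `M`
modulo `IM`, and any finite `R`-linear combination of the `mᵢ` lying in `IM` has all its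
coefficients in `I`).  Then the map `φ` from the `I`-adic completion of the free module
`⊕ᵢ R` to `M` induced by sending the `i`-th basis vector to `mᵢ` is surjective; if
moreover `M` is flat over `R`, then `φ` is an isomorphism, i.e. `M` is pro-free. -/
theorem stmt6 {R M ι : Type*} [CommRing R] [AddCommGroup M] [Module R M]
    (I : Ideal R) (hfg : I.FG) [IsAdicComplete I R] [IsAdicComplete I M]
    (m : ι → M)
    (hspan : (⊤ : Submodule R M) ≤ Submodule.span R (Set.range m) ⊔ (I • ⊤ : Submodule R M))
    (hind : ∀ c : ι →₀ R,
      (c.sum fun i a => a • m i) ∈ (I • ⊤ : Submodule R M) → ∀ i, c i ∈ I) :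
    ∃ φ : AdicCompletion I (ι →₀ R) →ₗ[R] M,
      (∀ v : ι →₀ R,
        φ (AdicCompletion.of I (ι →₀ R) v) = Finsupp.linearCombination R m v) ∧
      Function.Surjective φ ∧
      (Module.Flat R M → Function.Bijective φ) := by
  have hs : Function.Surjective
      ((I • ⊤ : Submodule R M).mkQ ∘ₗ Finsupp.linearCombination R m) := by
    intro y
    obtain ⟨x, rfl⟩ := Submodule.Quotient.mk_surjective _ y
    obtain ⟨a, ha, b, hb, hab⟩ := Submodule.mem_sup.mp (hspan (Submodule.mem_top (x := x)))
    obtain ⟨v, rfl⟩ := (Finsupp.mem_span_range_iff_exists_finsupp).mp ha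
    refine ⟨v, ?_⟩
    change Submodule.Quotient.mk (Finsupp.linearCombination R m v) = Submodule.Quotient.mk x
    rw [eq_comm, Submodule.Quotient.eq, ← hab, Finsupp.linearCombination_apply]
    simpa using hb
  have hsurj := AdicCompletion.map_surjective_of_mkQ_comp_surjective hs
  refine ⟨(AdicCompletion.ofLinearEquiv I M).symm.toLinearMap ∘ₗ
    (AdicCompletion.map I (Finsupp.linearCombination R m)).restrictScalars R, ?_, ?_, ?_⟩
  · intro v
    change (AdicCompletion.ofLinearEquiv I M).symm (AdicCompletion.map I
      (Finsupp.linearCombination R m) (AdicCompletion.of I (ι →₀ R) v)) = _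
    have h : AdicCompletion.map I (Finsupp.linearCombination R m)
        (AdicCompletion.of I (ι →₀ R) v) =
        AdicCompletion.of I M (Finsupp.linearCombination R m v) :=
      AdicCompletion.map_of I _ v
    exact (congrArg _ h).trans (AdicCompletion.ofLinearEquiv_symm_of I _)
  · exact (AdicCompletion.ofLinearEquiv I M).symm.surjective.comp hsurj
  · intro hflat
    refine ⟨?_, (AdicCompletion.ofLinearEquiv I M).symm.surjective.comp hsurj⟩
    refine (AdicCompletion.ofLinearEquiv I M).symm.injective.comp ?_
    have main : ∀ (n : ℕ) (v : ι →₀ R),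
        Finsupp.linearCombination R m v ∈ (I ^ n • ⊤ : Submodule R M) → ∀ i, v i ∈ I ^ n := by
      intro n
      induction n with
      | zero => intro v _ i; simp
      | succ n ih =>
        intro v hv j
        obtain ⟨c, hc⟩ := stmt6_coord I m hs hind j
        exact stmt6_step I m j c hc n v
          (ih v (Submodule.smul_mono_left (Ideal.pow_le_pow_right (Nat.le_succ n)) hv)) hv
    refine (injective_iff_map_eq_zero
      ((AdicCompletion.map I (Finsupp.linearCombination R m)).restrictScalars R)).mpr ?_
    intro x hx
    refine AdicCompletion.ext fun n => ?_
    obtain ⟨v, hv⟩ := Submodule.Quotient.mk_surjective _ (x.val n)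
    have h1 : (AdicCompletion.map I (Finsupp.linearCombination R m) x).val n = 0 := by
      have : AdicCompletion.map I (Finsupp.linearCombination R m) x = 0 := hx
      rw [this]; rfl
    rw [AdicCompletion.map_val_apply, ← hv] at h1
    have h2 : (Submodule.Quotient.mk (Finsupp.linearCombination R m v) :
        M ⧸ (I ^ n • ⊤ : Submodule R M)) = 0 := h1
    rw [Submodule.Quotient.mk_eq_zero] at h2
    rw [← hv]
    change Submodule.Quotient.mk v = 0
    rw [Submodule.Quotient.mk_eq_zero, ← Finsupp.sum_single v]
    refine Submodule.sum_mem _ fun i _ => ?_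
    have h3 : Finsupp.single i (v i) = v i • Finsupp.single i (1 : R) := by simp
    rw [h3]
    exact Submodule.smul_mem_smul (main n v h2 i) Submodule.mem_top
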